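/- Let γ > 0, 1 < α < 2, p > 1, a > 0, b > 0. There exist positive constants K₁ and K₂, depending only on α, γ, p, a, b but not on T, such that: for every T > 0, every f ∈ L¹(0,T), and every w ∈ C¹([0,T]) with w ≢ 0 for which the function t ↦ ₀I_t^{2−α}(w(s) − w'(0)s − w(0)) belongs to AC²([0,T]) and for almost every t ∈ [0,T] one has (₀D_t^α w)(t) + a·w(t) = (₀I_t^γ f)(t) and f(t) ≥ b·|w(t)|^p, the inequality T·w'(0) + w(0) ≤ K₁·T^{α+γ−pγ/(p−1)} + K₂·T^{−(α+γ)/(p−1)} holds. -/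

import Mathlib

open MeasureTheory Filter

/-- Riemann–Liouville fractional integral of order `σ` based at `0`:
`(₀I_t^σ f)(t) = (1/Γ(σ)) ∫₀ᵗ (t−s)^{σ−1} f(s) ds`. -/
noncomputable def rlInt (σ : ℝ) (f : ℝ → ℝ) (t : ℝ) : ℝ :=
  (1 / Real.Gamma σ) * ∫ s in (0:ℝ)..t, (t - s) ^ (σ - 1) * f s

/-- The function whose second derivative is the (left) Caputo derivative of order `α ∈ (1,2]`:
for `α < 2` it is `₀I_t^{2−α}(w(s) − w'(0)·s − w(0))`, and for `α = 2` it is `w` itself. -/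
noncomputable def capKernel (α : ℝ) (w : ℝ → ℝ) : ℝ → ℝ :=
  if α = 2 then w else rlInt (2 - α) (fun s => w s - deriv w 0 * s - w 0)

/-- Left Caputo fractional derivative of order `α ∈ (1,2]`:
`(₀D_t^α w)(t) = (d²/dt²)[ ₀I_t^{2−α}(w(s) − w'(0)s − w(0)) ](t)` (second derivative of `w` when `α = 2`). -/
noncomputable def caputoD (α : ℝ) (w : ℝ → ℝ) : ℝ → ℝ :=
  deriv (deriv (capKernel α w))

/-- `g ∈ AC²([0,T])`: `g` is differentiable on `[0,T]`, its second derivative is integrable,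
and `g'` is the integral of `g''` (i.e. `g'` is absolutely continuous). -/
def AC2On (g : ℝ → ℝ) (T : ℝ) : Prop :=
  (∀ t ∈ Set.Icc (0:ℝ) T, DifferentiableAt ℝ g t) ∧
  IntervalIntegrable (deriv (deriv g)) volume 0 T ∧
  ∀ t ∈ Set.Icc (0:ℝ) T, deriv g t = deriv g 0 + ∫ s in (0:ℝ)..t, deriv (deriv g) s

/-!
The Riemann–Liouville integrals form a semigroup, `I^τ I^σ = I^(τ+σ)`. Hence `I^(n+α)`, evaluated
at `T`, turns the Caputo derivative into `I^n (w - w'(0) s - w(0))` and the source `I^γ f` into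
`I^(n+α+γ) f`. In the combination `T I^n - κ I^(n+1)` with `κ = n (n + 2) / (n + 1)` the initial
data enter exactly through `T w'(0) + w(0)`, and since `κ < n + 1` the weight on `f` stays
positive. This bounds `(T w'(0) + w(0)) T ^ n` by multiples of `I^n |w|` and `I^(n+α) |w|` minus a
positive multiple of `I^(n+α+γ) |w| ^ p`, all evaluated at `T`. For `n = 1 + (α + γ) / (p - 1)`
Young's inequality, applied pointwise to `(T - s) ^ δ |w s|` with the `δ` that makes it
homogeneous in `T`, absorbs the former into the latter at the cost of two powers of `T`.
-/

section Semigroup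

open Real Set
open intervalIntegral (integral_of_le integral_congr integral_comp_sub_right)

theorem integral_sub_rpow_mul_sub_rpow {σ τ a b : ℝ} (hσ : 0 < σ) (hτ : 0 < τ) (hab : a < b) :
    ∫ r in a..b, (b - r) ^ (τ - 1) * (r - a) ^ (σ - 1) =
      Gamma τ * Gamma σ / Gamma (τ + σ) * (b - a) ^ (τ + σ - 1) := by
  have hba : 0 < b - a := sub_pos.2 hab
  have hcomplex := Complex.betaIntegral_scaled σ τ hba
  rw [Complex.betaIntegral_eq_Gamma_mul_div _ _ (by simpa) (by simpa), ← Complex.ofReal_add,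
    Complex.Gamma_ofReal, Complex.Gamma_ofReal, Complex.Gamma_ofReal] at hcomplex
  have hcast : ∫ x in 0..b - a, (x : ℂ) ^ ((σ : ℂ) - 1) * (((b - a : ℝ) : ℂ) - x) ^ ((τ : ℂ) - 1) =
      ∫ x in 0..b - a, ((x ^ (σ - 1) * (b - a - x) ^ (τ - 1) : ℝ) : ℂ) := by
    refine integral_congr fun x hx ↦ ?_
    rw [uIcc_of_le hba.le] at hx
    push_cast [Complex.ofReal_cpow hx.1, Complex.ofReal_cpow (sub_nonneg.2 hx.2)]
    rfl
  have hreal : ∫ x in 0..b - a, x ^ (σ - 1) * (b - a - x) ^ (τ - 1) =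
      (b - a) ^ (σ + τ - 1) * (Gamma σ * Gamma τ / Gamma (σ + τ)) := by
    rw [hcast, intervalIntegral.integral_ofReal, ← Complex.ofReal_one, ← Complex.ofReal_sub,
      ← Complex.ofReal_cpow hba.le] at hcomplex
    exact_mod_cast hcomplex
  have hshift := integral_comp_sub_right (fun x ↦ x ^ (σ - 1) * (b - a - x) ^ (τ - 1)) a
    (a := a) (b := b)
  simp only [sub_self, sub_sub_sub_cancel_right, hreal] at hshift
  simp only [mul_comm ((b - _) ^ (τ - 1)), hshift, add_comm τ σ, mul_comm (Gamma τ)]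
  rw [mul_comm]

theorem intervalIntegrable_sub_rpow_mul_sub_rpow {σ τ a b : ℝ} (hσ : 0 < σ) (hτ : 0 < τ)
    (hab : a < b) :
    IntervalIntegrable (fun r ↦ (b - r) ^ (τ - 1) * (r - a) ^ (σ - 1)) volume a b := by
  -- The integral of a non-integrable function is `0`, which the Beta value is not.
  refine not_imp_comm.1 intervalIntegral.integral_undef ?_
  rw [integral_sub_rpow_mul_sub_rpow hσ hτ hab]
  have := Gamma_pos_of_pos hσ
  have := Gamma_pos_of_pos hτ
  have := Gamma_pos_of_pos (add_pos hτ hσ)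
  have := sub_pos.2 hab
  positivity

theorem integral_sub_rpow_mul_sub_rpow_mul_const {σ τ a b : ℝ} (hσ : 0 < σ) (hτ : 0 < τ)
    (hab : a < b) (c : ℝ) :
    ∫ r in a..b, (b - r) ^ (τ - 1) * ((r - a) ^ (σ - 1) * c) =
      Gamma τ * Gamma σ / Gamma (τ + σ) * ((b - a) ^ (τ + σ - 1) * c) := by
  simp only [← mul_assoc, intervalIntegral.integral_mul_const,
    integral_sub_rpow_mul_sub_rpow hσ hτ hab]

theorem intervalIntegrable_sub_rpow_mul {σ a t : ℝ} (hσ : 1 ≤ σ) {u : ℝ → ℝ}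
    (hu : IntervalIntegrable u volume a t) :
    IntervalIntegrable (fun s ↦ (t - s) ^ (σ - 1) * u s) volume a t :=
  hu.continuousOn_mul
    ((continuous_const.sub continuous_id).rpow_const fun _ ↦ Or.inr (sub_nonneg.2 hσ)).continuousOn

/-- The triangle `{(r, s) | s < r}`. An iterated integral over `a < s < r ≤ b` is handled as an
integral over the square `(a, b]²` of the integrand cut off to this set. -/
def lowerTriangle : Set (ℝ × ℝ) := {q | q.2 < q.1}

theorem setIntegral_indicator_lowerTriangle_left {a b r : ℝ} (hr : r ∈ Ioc a b)
    (F : ℝ → ℝ → ℝ) :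
    ∫ s in Ioc a b, lowerTriangle.indicator (Function.uncurry F) (r, s) = ∫ s in a..r, F r s := by
  have hset : Ioc a b ∩ Iio r = Ioo a r := by grind
  rw [integral_of_le hr.1.le, integral_Ioc_eq_integral_Ioo (x := a) (y := r), ← hset,
    ← setIntegral_indicator measurableSet_Iio]
  rfl

theorem setIntegral_indicator_lowerTriangle_right {a b s : ℝ} (hs : s ∈ Ioc a b)
    (F : ℝ → ℝ → ℝ) :
    ∫ r in Ioc a b, lowerTriangle.indicator (Function.uncurry F) (r, s) = ∫ r in s..b, F r s := by
  have hset : Ioc a b ∩ Ioi s = Ioc s b := by grind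
  rw [integral_of_le hs.2, ← hset, ← setIntegral_indicator measurableSet_Ioi]
  rfl

theorem integral_integral_swap_lowerTriangle {a b : ℝ} (hab : a ≤ b) {F : ℝ → ℝ → ℝ}
    (hF : Integrable (lowerTriangle.indicator (Function.uncurry F))
      ((volume.restrict (Ioc a b)).prod (volume.restrict (Ioc a b)))) :
    ∫ r in a..b, ∫ s in a..r, F r s = ∫ s in a..b, ∫ r in s..b, F r s := by
  rw [integral_of_le hab, integral_of_le hab]
  calc ∫ r in Ioc a b, ∫ s in a..r, F r s
      = ∫ r in Ioc a b, ∫ s in Ioc a b, lowerTriangle.indicator (Function.uncurry F) (r, s) :=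
        setIntegral_congr_fun measurableSet_Ioc fun r hr ↦
          (setIntegral_indicator_lowerTriangle_left hr F).symm
    _ = ∫ s in Ioc a b, ∫ r in Ioc a b, lowerTriangle.indicator (Function.uncurry F) (r, s) :=
        integral_integral_swap hF
    _ = ∫ s in Ioc a b, ∫ r in s..b, F r s :=
        setIntegral_congr_fun measurableSet_Ioc fun s hs ↦
          setIntegral_indicator_lowerTriangle_right hs F

theorem integral_norm_sub_rpow_mul_sub_rpow_mul_const {σ τ s t : ℝ} (hσ : 0 < σ) (hτ : 0 < τ)
    (hst : s < t) (c : ℝ) :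
    ∫ r in s..t, ‖(t - r) ^ (τ - 1) * ((r - s) ^ (σ - 1) * c)‖ =
      Gamma τ * Gamma σ / Gamma (τ + σ) * ‖(t - s) ^ (τ + σ - 1) * c‖ := by
  rw [norm_mul, norm_of_nonneg (rpow_nonneg (sub_pos.2 hst).le _),
    ← integral_sub_rpow_mul_sub_rpow_mul_const hσ hτ hst]
  refine integral_congr fun r hr ↦ ?_
  rw [uIcc_of_le hst.le] at hr
  simp only [norm_mul, norm_of_nonneg (rpow_nonneg (sub_nonneg.2 hr.1) (σ - 1)),
    norm_of_nonneg (rpow_nonneg (sub_nonneg.2 hr.2) (τ - 1))]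

theorem aestronglyMeasurable_indicator_lowerTriangle_rpow_mul (σ τ t : ℝ) {u : ℝ → ℝ}
    {μ ν : Measure ℝ} [SFinite ν] (hu : AEStronglyMeasurable u ν) :
    AEStronglyMeasurable (lowerTriangle.indicator
        (Function.uncurry fun r s ↦ (t - r) ^ (τ - 1) * ((r - s) ^ (σ - 1) * u s))) (μ.prod ν) := by
  refine AEStronglyMeasurable.indicator ?_ (measurableSet_lt measurable_snd measurable_fst)
  have hτ : Measurable fun q : ℝ × ℝ ↦ (t - q.1) ^ (τ - 1) := by fun_prop
  have hσ : Measurable fun q : ℝ × ℝ ↦ (q.1 - q.2) ^ (σ - 1) := by fun_prop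
  exact hτ.aestronglyMeasurable.mul (hσ.aestronglyMeasurable.mul hu.comp_snd)

theorem integrable_indicator_lowerTriangle_rpow_mul {σ τ t : ℝ} (hσ : 0 < σ) (hτ : 0 < τ)
    (hτσ : 1 ≤ τ + σ) (ht : 0 ≤ t) {u : ℝ → ℝ} (hu : IntervalIntegrable u volume 0 t) :
    Integrable (lowerTriangle.indicator
        (Function.uncurry fun r s ↦ (t - r) ^ (τ - 1) * ((r - s) ^ (σ - 1) * u s)))
      ((volume.restrict (Ioc 0 t)).prod (volume.restrict (Ioc 0 t))) := by
  have hmem : ∀ᵐ s ∂volume.restrict (Ioc 0 t), s ∈ Ioo 0 t := by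
    rw [← restrict_Ioo_eq_restrict_Ioc]
    exact ae_restrict_mem measurableSet_Ioo
  refine (integrable_prod_iff' (aestronglyMeasurable_indicator_lowerTriangle_rpow_mul σ τ t
    ((intervalIntegrable_iff_integrableOn_Ioc_of_le ht).1 hu).1)).2 ⟨?_, ?_⟩
  · filter_upwards [hmem] with s hs
    have hsection : IntegrableOn (fun r ↦ (t - r) ^ (τ - 1) * ((r - s) ^ (σ - 1) * u s))
        (Ioc s t) := by
      rw [← intervalIntegrable_iff_integrableOn_Ioc_of_le hs.2.le]
      simpa only [mul_assoc] using
        (intervalIntegrable_sub_rpow_mul_sub_rpow hσ hτ hs.2).mul_const (u s)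
    have hcut : IntegrableOn
        ((Ioi s).indicator fun r ↦ (t - r) ^ (τ - 1) * ((r - s) ^ (σ - 1) * u s)) (Ioc 0 t) := by
      rw [IntegrableOn, integrable_indicator_iff measurableSet_Ioi,
        IntegrableOn, Measure.restrict_restrict measurableSet_Ioi]
      exact hsection.mono_set (by grind)
    exact hcut
  · have hkernel := ((intervalIntegrable_sub_rpow_mul hτσ hu).norm.const_mul
      (Gamma τ * Gamma σ / Gamma (τ + σ))).1
    refine hkernel.integrable.congr ?_
    filter_upwards [hmem] with s hs
    simp only [norm_indicator_eq_indicator_norm]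
    exact ((setIntegral_indicator_lowerTriangle_right (Ioo_subset_Ioc_self hs) fun r s ↦
      ‖(t - r) ^ (τ - 1) * ((r - s) ^ (σ - 1) * u s)‖).trans
      (integral_norm_sub_rpow_mul_sub_rpow_mul_const hσ hτ hs.2 (u s))).symm

theorem rlInt_rlInt {σ τ t : ℝ} (hσ : 0 < σ) (hτ : 0 < τ) (hτσ : 1 ≤ τ + σ)
    (ht : 0 ≤ t) {u : ℝ → ℝ} (hu : IntervalIntegrable u volume 0 t) :
    rlInt τ (rlInt σ u) t = rlInt (τ + σ) u t := by
  have hΓσ := (Gamma_pos_of_pos hσ).ne'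
  have hΓτ := (Gamma_pos_of_pos hτ).ne'
  have hswap := integral_integral_swap_lowerTriangle ht
    (integrable_indicator_lowerTriangle_rpow_mul hσ hτ hτσ ht hu)
  have hbeta : ∫ s in 0..t, ∫ r in s..t, (t - r) ^ (τ - 1) * ((r - s) ^ (σ - 1) * u s) =
      ∫ s in 0..t, Gamma τ * Gamma σ / Gamma (τ + σ) * ((t - s) ^ (τ + σ - 1) * u s) := by
    rw [integral_of_le ht, integral_of_le ht, integral_Ioc_eq_integral_Ioo,
      integral_Ioc_eq_integral_Ioo]
    exact setIntegral_congr_fun measurableSet_Ioo fun s hs ↦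
      integral_sub_rpow_mul_sub_rpow_mul_const hσ hτ hs.2 (u s)
  calc rlInt τ (rlInt σ u) t
      = 1 / Gamma τ * (1 / Gamma σ *
          ∫ r in 0..t, ∫ s in 0..r, (t - r) ^ (τ - 1) * ((r - s) ^ (σ - 1) * u s)) := by
        simp only [rlInt, ← intervalIntegral.integral_const_mul, mul_left_comm]
    _ = 1 / Gamma τ * (1 / Gamma σ *
          ∫ s in 0..t, Gamma τ * Gamma σ / Gamma (τ + σ) * ((t - s) ^ (τ + σ - 1) * u s)) := by
        rw [hswap, hbeta]
    _ = rlInt (τ + σ) u t := by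
        rw [intervalIntegral.integral_const_mul, rlInt]
        field_simp

theorem intervalIntegrable_rlInt {σ t : ℝ} (hσ : 0 < σ) (ht : 0 ≤ t) {u : ℝ → ℝ}
    (hu : IntervalIntegrable u volume 0 t) : IntervalIntegrable (rlInt σ u) volume 0 t := by
  have hint := (integrable_indicator_lowerTriangle_rpow_mul hσ one_pos (by linarith) ht
    hu).integral_prod_left
  rw [intervalIntegrable_iff_integrableOn_Ioc_of_le ht]
  refine (hint.const_mul (1 / Gamma σ)).congr ?_
  filter_upwards [ae_restrict_mem measurableSet_Ioc] with r hr
  rw [setIntegral_indicator_lowerTriangle_left hr]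
  simp [rlInt]

end Semigroup

section Calculus

open Real Set
open intervalIntegral (integral_of_le integral_congr)

theorem rlInt_one (u : ℝ → ℝ) (t : ℝ) : rlInt 1 u t = ∫ s in 0..t, u s := by
  simp [rlInt]

theorem rlInt_congr {t : ℝ} (ht : 0 ≤ t) (σ : ℝ) {u v : ℝ → ℝ} (huv : ∀ s ∈ Icc 0 t, u s = v s) :
    rlInt σ u t = rlInt σ v t := by
  refine congrArg _ (integral_congr fun s hs ↦ ?_)
  rw [uIcc_of_le ht] at hs
  simp only [huv s hs]

theorem rlInt_const_mul (σ c : ℝ) (u : ℝ → ℝ) (t : ℝ) :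
    rlInt σ (fun s ↦ c * u s) t = c * rlInt σ u t := by
  simp only [rlInt, mul_left_comm _ c, intervalIntegral.integral_const_mul]

theorem rlInt_add {σ t : ℝ} (hσ : 1 ≤ σ) {u v : ℝ → ℝ} (hu : IntervalIntegrable u volume 0 t)
    (hv : IntervalIntegrable v volume 0 t) :
    rlInt σ (fun s ↦ u s + v s) t = rlInt σ u t + rlInt σ v t := by
  simp only [rlInt, mul_add (_ ^ _)]
  rw [intervalIntegral.integral_add (intervalIntegrable_sub_rpow_mul hσ hu)
    (intervalIntegrable_sub_rpow_mul hσ hv), mul_add]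

theorem rlInt_sub {σ t : ℝ} (hσ : 1 ≤ σ) {u v : ℝ → ℝ} (hu : IntervalIntegrable u volume 0 t)
    (hv : IntervalIntegrable v volume 0 t) :
    rlInt σ (fun s ↦ u s - v s) t = rlInt σ u t - rlInt σ v t := by
  simp only [rlInt, mul_sub (_ ^ _)]
  rw [intervalIntegral.integral_sub (intervalIntegrable_sub_rpow_mul hσ hu)
    (intervalIntegrable_sub_rpow_mul hσ hv), mul_sub]

theorem rlInt_mono_ae {σ t : ℝ} (hσ : 1 ≤ σ) (ht : 0 ≤ t) {u v : ℝ → ℝ}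
    (hu : IntervalIntegrable u volume 0 t) (hv : IntervalIntegrable v volume 0 t)
    (huv : ∀ᵐ s ∂volume.restrict (Icc 0 t), u s ≤ v s) : rlInt σ u t ≤ rlInt σ v t := by
  have := (Gamma_pos_of_pos (zero_lt_one.trans_le hσ)).le
  refine mul_le_mul_of_nonneg_left (intervalIntegral.integral_mono_ae_restrict ht
    (intervalIntegrable_sub_rpow_mul hσ hu) (intervalIntegrable_sub_rpow_mul hσ hv) ?_)
    (by positivity)
  filter_upwards [huv, ae_restrict_mem measurableSet_Icc] with s hs hmem
  exact mul_le_mul_of_nonneg_left hs (rpow_nonneg (sub_nonneg.2 hmem.2) _)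

theorem integral_sub_rpow {σ : ℝ} (hσ : 0 < σ) (t : ℝ) :
    ∫ s in 0..t, (t - s) ^ (σ - 1) = t ^ σ / σ := by
  rw [intervalIntegral.integral_comp_sub_left (fun x ↦ x ^ (σ - 1)) t,
    integral_rpow (Or.inl (by linarith))]
  simp [hσ.ne']

theorem intervalIntegrable_sub_rpow {σ : ℝ} (hσ : 0 < σ) (t : ℝ) :
    IntervalIntegrable (fun s ↦ (t - s) ^ (σ - 1)) volume 0 t := by
  simpa using ((intervalIntegral.intervalIntegrable_rpow' (a := 0) (b := t)
    (by linarith : -1 < σ - 1)).comp_sub_left t).symm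

theorem rlInt_const {σ : ℝ} (hσ : 0 < σ) (c t : ℝ) :
    rlInt σ (fun _ ↦ c) t = c * (t ^ σ / Gamma (σ + 1)) := by
  rw [rlInt, intervalIntegral.integral_mul_const, integral_sub_rpow hσ, Gamma_add_one hσ.ne']
  field_simp

theorem rlInt_id {σ t : ℝ} (hσ : 0 < σ) (ht : 0 ≤ t) :
    rlInt σ (fun s ↦ s) t = t ^ (σ + 1) / Gamma (σ + 2) := by
  have hid : (fun s : ℝ ↦ s) = rlInt 1 fun _ ↦ 1 := by
    ext s
    simp [rlInt_one]
  rw [hid, rlInt_rlInt one_pos hσ (by linarith) ht intervalIntegrable_const,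
    rlInt_const (by linarith), one_mul, add_assoc, one_add_one_eq_two]

theorem rlInt_sub_rpow_mul {σ δ t : ℝ} (hσ : 0 < σ) (hδ : 0 < σ + δ) (ht : 0 ≤ t) (u : ℝ → ℝ) :
    rlInt σ (fun s ↦ (t - s) ^ δ * u s) t = Gamma (σ + δ) / Gamma σ * rlInt (σ + δ) u t := by
  have hpow : ∫ s in 0..t, (t - s) ^ (σ - 1) * ((t - s) ^ δ * u s) =
      ∫ s in 0..t, (t - s) ^ (σ + δ - 1) * u s := by
    rw [integral_of_le ht, integral_of_le ht, integral_Ioc_eq_integral_Ioo,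
      integral_Ioc_eq_integral_Ioo]
    refine setIntegral_congr_fun measurableSet_Ioo fun s hs ↦ ?_
    simp only [← mul_assoc, ← rpow_add (sub_pos.2 hs.2), sub_add_eq_add_sub]
  have := (Gamma_pos_of_pos hδ).ne'
  rw [rlInt, rlInt, hpow]
  field_simp

theorem rlInt_sub_mul {σ t : ℝ} (hσ : 0 < σ) (ht : 0 ≤ t) (u : ℝ → ℝ) :
    rlInt σ (fun s ↦ (t - s) * u s) t = σ * rlInt (σ + 1) u t := by
  have h := rlInt_sub_rpow_mul hσ (add_pos hσ one_pos) ht u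
  simpa only [rpow_one, Gamma_add_one hσ.ne', mul_div_cancel_right₀ _ (Gamma_pos_of_pos hσ).ne']
    using h

theorem abs_rlInt_le_of_abs_le {σ t C : ℝ} (hσ : 0 < σ) (ht : 0 ≤ t) {u : ℝ → ℝ}
    (hu : ∀ s ∈ Ioc 0 t, |u s| ≤ C) : |rlInt σ u t| ≤ C * (t ^ σ / Gamma (σ + 1)) := by
  have hΓ := Gamma_pos_of_pos hσ
  have hint : ‖∫ s in 0..t, (t - s) ^ (σ - 1) * u s‖ ≤ ∫ s in 0..t, (t - s) ^ (σ - 1) * C := by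
    refine intervalIntegral.norm_integral_le_of_norm_le ht (Eventually.of_forall fun s hs ↦ ?_)
      ((intervalIntegrable_sub_rpow hσ t).mul_const C)
    have hnn := rpow_nonneg (sub_nonneg.2 hs.2) (σ - 1)
    rw [norm_mul, norm_of_nonneg hnn]
    exact mul_le_mul_of_nonneg_left (hu s hs) hnn
  rw [← rlInt_const hσ, rlInt, rlInt, abs_mul, abs_of_pos (one_div_pos.2 hΓ)]
  exact mul_le_mul_of_nonneg_left hint (one_div_pos.2 hΓ).le

theorem tendsto_rlInt_div_nhdsGT_zero {σ : ℝ} (hσ : 0 < σ) {u : ℝ → ℝ} (hu0 : u 0 = 0)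
    (hu : HasDerivWithinAt u 0 (Ioi 0) 0) :
    Tendsto (fun t ↦ rlInt σ u t / t) (nhdsWithin 0 (Ioi 0)) (nhds 0) := by
  have hsmall : ∀ᶠ s in nhdsWithin (0 : ℝ) (Ioi 0), |u s| ≤ |s| := by
    simpa [hu0] using (hasDerivWithinAt_iff_isLittleO.1 hu).bound (c := 1) one_pos
  obtain ⟨ε, hε, hle⟩ := mem_nhdsGT_iff_exists_Ioo_subset.1 hsmall
  refine squeeze_zero_norm' (a := fun t ↦ t ^ σ / Gamma (σ + 1)) ?_ ?_
  · filter_upwards [Ioo_mem_nhdsGT hε] with t ht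
    have hbound : ∀ s ∈ Ioc 0 t, |u s| ≤ t := fun s hs ↦
      (hle ⟨hs.1, hs.2.trans_lt ht.2⟩).trans ((abs_of_pos hs.1).trans_le hs.2)
    rw [norm_div, norm_eq_abs, norm_of_nonneg ht.1.le, div_le_iff₀ ht.1, mul_comm]
    exact abs_rlInt_le_of_abs_le hσ ht.1.le hbound
  · have hcont : ContinuousAt (fun t : ℝ ↦ t ^ σ / Gamma (σ + 1)) 0 :=
      (continuousAt_rpow_const 0 σ (Or.inr hσ.le)).div_const _
    simpa [ContinuousAt, hσ.ne'] using hcont.tendsto.mono_left (nhdsWithin_le_nhds (s := Ioi 0))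

theorem deriv_rlInt_zero {σ : ℝ} (hσ : 0 < σ) {u : ℝ → ℝ} (hu0 : u 0 = 0)
    (hu : HasDerivWithinAt u 0 (Ioi 0) 0) (hd : DifferentiableAt ℝ (rlInt σ u) 0) :
    deriv (rlInt σ u) 0 = 0 := by
  have hslope := hd.hasDerivAt.tendsto_slope_zero_right
  have h0 : rlInt σ u 0 = 0 := by simp [rlInt]
  simp only [zero_add, h0, sub_zero, smul_eq_mul, inv_mul_eq_div] at hslope
  exact tendsto_nhds_unique hslope (tendsto_rlInt_div_nhdsGT_zero hσ hu0 hu)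

theorem AC2On.sub_eq_rlInt_two {g : ℝ → ℝ} {T t : ℝ} (hg : AC2On g T) (ht : t ∈ Icc 0 T) :
    g t - deriv g 0 * t - g 0 = rlInt 2 (deriv (deriv g)) t := by
  obtain ⟨hdiff, hint, hftc⟩ := hg
  have hsub : Icc 0 t ⊆ Icc 0 T := Icc_subset_Icc_right ht.2
  have hint' : IntervalIntegrable (deriv (deriv g)) volume 0 t :=
    hint.mono_set (by rwa [uIcc_of_le ht.1, uIcc_of_le (ht.1.trans ht.2)])
  have hfirst : ∀ r ∈ uIcc 0 t, rlInt 1 (deriv (deriv g)) r = deriv g r - deriv g 0 := by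
    intro r hr
    rw [uIcc_of_le ht.1] at hr
    rw [rlInt_one, hftc r (hsub hr), add_sub_cancel_left]
  have hderiv : ∀ r ∈ uIcc 0 t, HasDerivAt (fun r ↦ g r - deriv g 0 * r)
      (rlInt 1 (deriv (deriv g)) r) r := by
    intro r hr
    rw [hfirst r hr]
    rw [uIcc_of_le ht.1] at hr
    exact (hdiff r (hsub hr)).hasDerivAt.fun_sub (hasDerivAt_const_mul (deriv g 0))
  rw [← one_add_one_eq_two, ← rlInt_rlInt one_pos one_pos (by norm_num) ht.1 hint', rlInt_one,
    intervalIntegral.integral_eq_sub_of_hasDerivAt hderiv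
      (intervalIntegrable_rlInt one_pos ht.1 hint')]
  ring

theorem rlInt_two_caputoD {α T : ℝ} (hα : α < 2) {w : ℝ → ℝ} (hw : DifferentiableAt ℝ w 0)
    (hAC : AC2On (capKernel α w) T) {t : ℝ} (ht : t ∈ Icc 0 T) :
    rlInt 2 (caputoD α w) t = rlInt (2 - α) (fun s ↦ w s - deriv w 0 * s - w 0) t := by
  have hcap : capKernel α w = rlInt (2 - α) fun s ↦ w s - deriv w 0 * s - w 0 := if_neg hα.ne
  have hzero : capKernel α w 0 = 0 := by simp [hcap, rlInt]
  have hderiv : HasDerivAt (fun s ↦ w s - deriv w 0 * s - w 0) 0 0 := by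
    simpa using (hw.hasDerivAt.sub ((hasDerivAt_id (0 : ℝ)).const_mul (deriv w 0))).sub_const (w 0)
  have hderiv_zero : deriv (capKernel α w) 0 = 0 := by
    have hdiff := hAC.1 0 ⟨le_rfl, ht.1.trans ht.2⟩
    rw [hcap] at hdiff ⊢
    exact deriv_rlInt_zero (sub_pos.2 hα) (by simp) hderiv.hasDerivWithinAt hdiff
  rw [caputoD, ← hAC.sub_eq_rlInt_two ht, hzero, hderiv_zero, hcap]
  ring

theorem rlInt_caputoD {α ν T : ℝ} (hα : α ≤ 2) (hν : 2 < ν) (hαν : α + 1 ≤ ν) (hT : 0 ≤ T)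
    {w : ℝ → ℝ} (hw : IntervalIntegrable w volume 0 T) (hw0 : DifferentiableAt ℝ w 0)
    (hAC : AC2On (capKernel α w) T) :
    rlInt ν (caputoD α w) T = rlInt (ν - α) (fun s ↦ w s - deriv w 0 * s - w 0) T := by
  have hsplit : rlInt ν (caputoD α w) T = rlInt (ν - 2) (rlInt 2 (caputoD α w)) T := by
    rw [caputoD, rlInt_rlInt two_pos (sub_pos.2 hν) (by linarith) hT hAC.2.1, sub_add_cancel]
  rw [hsplit]
  rcases hα.lt_or_eq with hlt | rfl
  · have hr : IntervalIntegrable (fun s ↦ w s - deriv w 0 * s - w 0) volume 0 T :=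
      (hw.sub ((continuous_const.mul continuous_id).intervalIntegrable 0 T)).sub
        intervalIntegrable_const
    rw [rlInt_congr hT _ fun t ht ↦ rlInt_two_caputoD hlt hw0 hAC ht,
      rlInt_rlInt (sub_pos.2 hlt) (sub_pos.2 hν) (by linarith) hT hr, sub_add_sub_cancel]
  · rw [capKernel, if_pos rfl] at hAC
    refine rlInt_congr hT _ fun t ht ↦ ?_
    rw [caputoD, capKernel, if_pos rfl, hAC.sub_eq_rlInt_two ht]

end Calculus

section TestFunctional

open Real Set

/-- The pairing of `u` with the test function `s ↦ (T - (κ / ν) (T - s)) (T - s) ^ (ν - 1) / Γ(ν)`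
on `[0, T]`, see `rlTest_eq_rlInt`. It is defined by Riemann–Liouville integrals so that the
semigroup law applies to it directly. -/
noncomputable def rlTest (κ ν : ℝ) (u : ℝ → ℝ) (T : ℝ) : ℝ :=
  T * rlInt ν u T - κ * rlInt (ν + 1) u T

variable {κ ν T : ℝ} {u v : ℝ → ℝ}

theorem rlTest_const_mul (κ ν c : ℝ) (u : ℝ → ℝ) (T : ℝ) :
    rlTest κ ν (fun s ↦ c * u s) T = c * rlTest κ ν u T := by
  simp only [rlTest, rlInt_const_mul]
  ring

theorem rlTest_add (κ : ℝ) (hν : 1 ≤ ν) (hu : IntervalIntegrable u volume 0 T)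
    (hv : IntervalIntegrable v volume 0 T) :
    rlTest κ ν (fun s ↦ u s + v s) T = rlTest κ ν u T + rlTest κ ν v T := by
  simp only [rlTest, rlInt_add hν hu hv, rlInt_add (show 1 ≤ ν + 1 by linarith) hu hv]
  ring

theorem rlTest_sub (κ : ℝ) (hν : 1 ≤ ν) (hu : IntervalIntegrable u volume 0 T)
    (hv : IntervalIntegrable v volume 0 T) :
    rlTest κ ν (fun s ↦ u s - v s) T = rlTest κ ν u T - rlTest κ ν v T := by
  simp only [rlTest, rlInt_sub hν hu hv, rlInt_sub (show 1 ≤ ν + 1 by linarith) hu hv]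
  ring

theorem rlTest_eq_rlInt (κ : ℝ) (hν : 1 ≤ ν) (hT : 0 ≤ T) (hu : IntervalIntegrable u volume 0 T) :
    rlTest κ ν u T = rlInt ν (fun s ↦ (T - κ / ν * (T - s)) * u s) T := by
  have hν0 : 0 < ν := zero_lt_one.trans_le hν
  have hv : IntervalIntegrable (fun s ↦ (T - s) * u s) volume 0 T :=
    hu.continuousOn_mul (by fun_prop)
  have hexpand : (fun s ↦ (T - κ / ν * (T - s)) * u s) =
      fun s ↦ T * u s - κ / ν * ((T - s) * u s) := by
    ext s
    ring
  rw [hexpand, rlInt_sub hν (hu.const_mul T) (hv.const_mul _), rlInt_const_mul, rlInt_const_mul,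
    rlInt_sub_mul hν0 hT, rlTest]
  field_simp

theorem intervalIntegrable_rlTest_weight_mul (κ ν : ℝ) (hu : IntervalIntegrable u volume 0 T) :
    IntervalIntegrable (fun s ↦ (T - κ / ν * (T - s)) * u s) volume 0 T :=
  hu.continuousOn_mul (by fun_prop)

theorem rlTest_mono_ae (hν : 1 ≤ ν) (hκν : κ ≤ ν) (hT : 0 ≤ T)
    (hu : IntervalIntegrable u volume 0 T) (hv : IntervalIntegrable v volume 0 T)
    (huv : ∀ᵐ s ∂volume.restrict (Icc 0 T), u s ≤ v s) : rlTest κ ν u T ≤ rlTest κ ν v T := by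
  have hratio : κ / ν ≤ 1 := div_le_one_of_le₀ hκν (by linarith)
  rw [rlTest_eq_rlInt κ hν hT hu, rlTest_eq_rlInt κ hν hT hv]
  refine rlInt_mono_ae hν hT (intervalIntegrable_rlTest_weight_mul κ ν hu)
    (intervalIntegrable_rlTest_weight_mul κ ν hv) ?_
  filter_upwards [huv, ae_restrict_mem measurableSet_Icc] with s hs hmem
  have hweight : 0 ≤ T - κ / ν * (T - s) := by nlinarith [hmem.1, hmem.2]
  exact mul_le_mul_of_nonneg_left hs hweight

theorem le_rlTest_of_nonneg (hκ : 0 ≤ κ) (hν : 1 ≤ ν) (hT : 0 ≤ T)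
    (hu : IntervalIntegrable u volume 0 T) (hu0 : ∀ s, 0 ≤ u s) :
    (1 - κ / ν) * T * rlInt ν u T ≤ rlTest κ ν u T := by
  have hratio : 0 ≤ κ / ν := div_nonneg hκ (by linarith)
  rw [rlTest_eq_rlInt κ hν hT hu, ← rlInt_const_mul]
  refine rlInt_mono_ae hν hT (hu.const_mul _) (intervalIntegrable_rlTest_weight_mul κ ν hu) ?_
  filter_upwards [ae_restrict_mem measurableSet_Icc] with s hs
  exact mul_le_mul_of_nonneg_right (by nlinarith [hs.1]) (hu0 s)

theorem abs_rlTest_le (hκ : 0 ≤ κ) (hν : 1 ≤ ν) (hκν : κ ≤ 2 * ν) (hT : 0 ≤ T)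
    (hu : IntervalIntegrable u volume 0 T) :
    |rlTest κ ν u T| ≤ T * rlInt ν (fun s ↦ |u s|) T := by
  have hν0 : 0 < ν := zero_lt_one.trans_le hν
  have hratio : 0 ≤ κ / ν := div_nonneg hκ hν0.le
  have hratio_two : κ / ν ≤ 2 := (div_le_iff₀ hν0).2 hκν
  have hweight : ∀ s ∈ Icc 0 T, |(T - κ / ν * (T - s)) * u s| ≤ T * |u s| := fun s hs ↦ by
    rw [abs_mul]
    refine mul_le_mul_of_nonneg_right (abs_le.2 ⟨?_, ?_⟩) (abs_nonneg _) <;>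
      nlinarith [hs.1, hs.2]
  have hint := intervalIntegrable_rlTest_weight_mul κ ν hu
  have habs := hu.abs.const_mul T
  rw [rlTest_eq_rlInt κ hν hT hu, ← rlInt_const_mul, abs_le, ← neg_one_mul, ← rlInt_const_mul]
  constructor
  · refine rlInt_mono_ae hν hT (habs.const_mul (-1)) hint ?_
    filter_upwards [ae_restrict_mem measurableSet_Icc] with s hs
    linarith [neg_le_of_abs_le (hweight s hs)]
  · refine rlInt_mono_ae hν hT hint habs ?_
    filter_upwards [ae_restrict_mem measurableSet_Icc] with s hs
    exact le_of_abs_le (hweight s hs)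

theorem rlTest_rlInt (κ : ℝ) {γ : ℝ} (hγ : 0 < γ) (hν : 1 ≤ ν) (hT : 0 ≤ T)
    (hu : IntervalIntegrable u volume 0 T) : rlTest κ ν (rlInt γ u) T = rlTest κ (ν + γ) u T := by
  rw [rlTest, rlTest, rlInt_rlInt hγ (by linarith) (by linarith) hT hu,
    rlInt_rlInt hγ (by linarith) (by linarith) hT hu, add_right_comm]

theorem rlTest_caputoD (κ : ℝ) {n α : ℝ} (hn : 1 ≤ n) (hα1 : 1 < α) (hα2 : α ≤ 2) (hT : 0 ≤ T)
    {w : ℝ → ℝ} (hw : IntervalIntegrable w volume 0 T) (hw0 : DifferentiableAt ℝ w 0)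
    (hAC : AC2On (capKernel α w) T) :
    rlTest κ (n + α) (caputoD α w) T = rlTest κ n (fun s ↦ w s - deriv w 0 * s - w 0) T := by
  rw [rlTest, rlTest, rlInt_caputoD hα2 (by linarith) (by linarith) hT hw hw0 hAC,
    rlInt_caputoD hα2 (by linarith) (by linarith) hT hw hw0 hAC, add_sub_cancel_right,
    add_right_comm, add_sub_cancel_right]

/-- The value of `κ` for which `rlTest κ n` sees the affine function `s ↦ d * s + c` only through
its value `T * d + c` at `T`, see `rlTest_balancedWeight_affine`. -/
noncomputable def balancedWeight (n : ℝ) : ℝ := n * (n + 2) / (n + 1)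

theorem balancedWeight_nonneg {n : ℝ} (hn : 0 ≤ n) : 0 ≤ balancedWeight n := by
  rw [balancedWeight]
  positivity

theorem balancedWeight_lt_add_one {n : ℝ} (hn : 0 ≤ n) : balancedWeight n < n + 1 := by
  rw [balancedWeight, div_lt_iff₀ (by linarith)]
  linarith

theorem one_sub_balancedWeight_div_pos {n σ : ℝ} (hn : 0 ≤ n) (hσ : n + 1 ≤ σ) :
    0 < 1 - balancedWeight n / σ :=
  sub_pos.2 ((div_lt_one (by linarith)).2 ((balancedWeight_lt_add_one hn).trans_le hσ))

theorem rlTest_balancedWeight_affine {n : ℝ} (hn : 1 ≤ n) (hT : 0 < T) (d c : ℝ) :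
    rlTest (balancedWeight n) n (fun s ↦ d * s + c) T =
      (T * d + c) * T ^ n * T / ((n + 1) * Gamma (n + 2)) := by
  have hn0 : 0 < n := by linarith
  have hΓ := (Gamma_pos_of_pos hn0).ne'
  have hΓ1 : Gamma (n + 1) = n * Gamma n := Gamma_add_one hn0.ne'
  have hΓ2 : Gamma (n + 2) = (n + 1) * (n * Gamma n) := by
    rw [← hΓ1, ← Gamma_add_one (by linarith), add_assoc, one_add_one_eq_two]
  have hΓ3 : Gamma (n + 1 + 2) = (n + 2) * ((n + 1) * (n * Gamma n)) := by
    rw [← hΓ2, ← Gamma_add_one (by linarith), add_right_comm]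
  have hT1 : T ^ (n + 1) = T ^ n * T := rpow_add_one hT.ne' n
  have hT2 : T ^ (n + 1 + 1) = T ^ n * T * T := by rw [rpow_add_one hT.ne', hT1]
  rw [rlTest_add _ hn ((continuous_const_mul d).intervalIntegrable 0 T) intervalIntegrable_const,
    rlTest_const_mul, rlTest, rlTest,
    rlInt_id hn0 hT.le, rlInt_id (by linarith) hT.le, rlInt_const hn0, rlInt_const (by linarith),
    hT2, hT1, hΓ3, add_assoc n 1 1, one_add_one_eq_two, hΓ2, hΓ1, balancedWeight]
  field_simp
  ring

end TestFunctional

section Absorption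

open Real Set

theorem mul_le_mul_rpow_add {A β p z : ℝ} (hA : 0 ≤ A) (hβ : 0 < β) (hp : 1 < p) (hz : 0 ≤ z) :
    A * z ≤ β * z ^ p + A * (A / β) ^ (1 / (p - 1)) := by
  have hp0 : 0 < p - 1 := sub_pos.2 hp
  have hAβ : 0 ≤ A / β := div_nonneg hA hβ.le
  rcases le_total z ((A / β) ^ (1 / (p - 1))) with hsmall | hlarge
  · exact (mul_le_mul_of_nonneg_left hsmall hA).trans
      (le_add_of_nonneg_left (mul_nonneg hβ.le (rpow_nonneg hz p)))
  · have hpow : A / β ≤ z ^ (p - 1) := by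
      calc A / β = ((A / β) ^ (1 / (p - 1))) ^ (p - 1) := by
            rw [← rpow_mul hAβ, one_div_mul_cancel hp0.ne', rpow_one]
        _ ≤ z ^ (p - 1) := rpow_le_rpow (rpow_nonneg hAβ _) hlarge hp0.le
    calc A * z ≤ β * z ^ (p - 1) * z :=
          mul_le_mul_of_nonneg_right ((div_le_iff₀' hβ).1 hpow) hz
      _ = β * z ^ p := by
          rw [mul_assoc, ← rpow_add_one' hz (by linarith), sub_add_cancel]
      _ ≤ β * z ^ p + A * (A / β) ^ (1 / (p - 1)) :=
          le_add_of_nonneg_right (mul_nonneg hA (rpow_nonneg hAβ _))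

theorem mul_rlInt_sub_rpow_mul_abs_le {A β p μ δ T : ℝ} (hA : 0 ≤ A) (hβ : 0 < β) (hp : 1 < p)
    (hμ : 1 ≤ μ) (hδ : 0 ≤ δ) (hT : 0 ≤ T) {w : ℝ → ℝ} (hw : IntervalIntegrable w volume 0 T)
    (hwp : IntervalIntegrable (fun s ↦ |w s| ^ p) volume 0 T) :
    A * rlInt μ (fun s ↦ (T - s) ^ δ * |w s|) T ≤
      β * rlInt μ (fun s ↦ (T - s) ^ (p * δ) * |w s| ^ p) T +
        A * (A / β) ^ (1 / (p - 1)) * (T ^ μ / Gamma (μ + 1)) := by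
  have hweight : ∀ {ε : ℝ} {v : ℝ → ℝ}, 0 ≤ ε → IntervalIntegrable v volume 0 T →
      IntervalIntegrable (fun s ↦ (T - s) ^ ε * v s) volume 0 T := fun hε hv ↦
    hv.continuousOn_mul
      ((continuous_const.sub continuous_id).rpow_const fun _ ↦ Or.inr hε).continuousOn
  have hleft := (hweight hδ hw.abs).const_mul A
  have hright := (hweight (mul_nonneg (by linarith : 0 ≤ p) hδ) hwp).const_mul β
  rw [← rlInt_const_mul, ← rlInt_const_mul, ← rlInt_const (zero_lt_one.trans_le hμ),
    ← rlInt_add hμ hright intervalIntegrable_const]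
  refine rlInt_mono_ae hμ hT hleft (hright.add intervalIntegrable_const) ?_
  filter_upwards [ae_restrict_mem measurableSet_Icc] with s hs
  have hTs : 0 ≤ T - s := sub_nonneg.2 hs.2
  rw [mul_comm p δ, rpow_mul hTs, ← mul_rpow (rpow_nonneg hTs δ) (abs_nonneg _)]
  exact mul_le_mul_rpow_add hA hβ hp (mul_nonneg (rpow_nonneg hTs δ) (abs_nonneg _))

theorem exists_mul_rlInt_abs_le {A β p μ δ : ℝ} (hA : 0 ≤ A) (hβ : 0 < β) (hp : 1 < p)
    (hμ : 1 ≤ μ) (hδ : 0 ≤ δ) : ∃ C > 0, ∀ T ≥ 0, ∀ w : ℝ → ℝ, IntervalIntegrable w volume 0 T →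
      IntervalIntegrable (fun s ↦ |w s| ^ p) volume 0 T →
      A * rlInt (μ + δ) (fun s ↦ |w s|) T ≤
        β * rlInt (μ + p * δ) (fun s ↦ |w s| ^ p) T + C * T ^ μ := by
  have hμ0 : 0 < μ := zero_lt_one.trans_le hμ
  have hμδ : 0 < μ + δ := add_pos_of_pos_of_nonneg hμ0 hδ
  have hμpδ : 0 < μ + p * δ := add_pos_of_pos_of_nonneg hμ0 (mul_nonneg (by linarith) hδ)
  have := Gamma_pos_of_pos hμ0
  have := Gamma_pos_of_pos hμδ
  have := Gamma_pos_of_pos hμpδ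
  have := Gamma_pos_of_pos (add_pos hμ0 one_pos)
  set A' := A * (Gamma μ / Gamma (μ + δ)) with hA'
  set β' := β * (Gamma μ / Gamma (μ + p * δ)) with hβ'
  have hA'0 : 0 ≤ A' := by positivity
  have hβ'0 : 0 < β' := by positivity
  refine ⟨A' * (A' / β') ^ (1 / (p - 1)) / Gamma (μ + 1) + 1, by positivity,
    fun T hT w hw hwp ↦ ?_⟩
  have hbound := mul_rlInt_sub_rpow_mul_abs_le hA'0 hβ'0 hp hμ hδ hT hw hwp
  have hleft : A' * (Gamma (μ + δ) / Gamma μ) = A := by rw [hA']; field_simp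
  have hright : β' * (Gamma (μ + p * δ) / Gamma μ) = β := by rw [hβ']; field_simp
  rw [rlInt_sub_rpow_mul hμ0 hμδ hT, rlInt_sub_rpow_mul hμ0 hμpδ hT, ← mul_assoc, ← mul_assoc,
    hleft, hright, ← mul_div_assoc, mul_div_right_comm] at hbound
  linarith [rpow_nonneg hT μ]

theorem exists_rlInt_abs_add_le {n α γ p β : ℝ} (a : ℝ) (hα : 0 ≤ α) (hγ : 0 ≤ γ) (hp : 1 < p)
    (hβ : 0 < β) (hn : 1 + (α + γ) / (p - 1) ≤ n) :
    ∃ C₁ > 0, ∃ C₂ > 0, ∀ T ≥ 0, ∀ w : ℝ → ℝ, IntervalIntegrable w volume 0 T →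
      IntervalIntegrable (fun s ↦ |w s| ^ p) volume 0 T →
      rlInt n (fun s ↦ |w s|) T + |a| * rlInt (n + α) (fun s ↦ |w s|) T ≤
        β * rlInt (n + α + γ) (fun s ↦ |w s| ^ p) T +
          (C₁ * T ^ (n + (α - γ / (p - 1))) + C₂ * T ^ (n - (α + γ) / (p - 1))) := by
  have hp0 : 0 < p - 1 := sub_pos.2 hp
  have hδ₁ : 0 ≤ γ / (p - 1) := div_nonneg hγ hp0.le
  have hδ₂ : 0 ≤ (α + γ) / (p - 1) := div_nonneg (add_nonneg hα hγ) hp0.le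
  have hμ₁ : 1 ≤ n + (α - γ / (p - 1)) := by
    linarith [div_nonneg hα hp0.le, add_div α γ (p - 1)]
  obtain ⟨C₁, hC₁, hbound₁⟩ := exists_mul_rlInt_abs_le (abs_nonneg a) (half_pos hβ) hp hμ₁ hδ₁
  obtain ⟨C₂, hC₂, hbound₂⟩ := exists_mul_rlInt_abs_le zero_le_one (half_pos hβ) hp
    (le_sub_iff_add_le.2 hn) hδ₂
  refine ⟨C₁, hC₁, C₂, hC₂, fun T hT w hw hwp ↦ ?_⟩
  have habsorb₁ := hbound₁ T hT w hw hwp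
  have habsorb₂ := hbound₂ T hT w hw hwp
  rw [show n + (α - γ / (p - 1)) + γ / (p - 1) = n + α by ring,
    show n + (α - γ / (p - 1)) + p * (γ / (p - 1)) = n + α + γ by field_simp; ring] at habsorb₁
  rw [sub_add_cancel, one_mul,
    show n - (α + γ) / (p - 1) + p * ((α + γ) / (p - 1)) = n + α + γ by field_simp; ring]
    at habsorb₂
  linarith

end Absorption

section Bound

open Real Set

variable {γ α a b p n T : ℝ} {f w : ℝ → ℝ}

theorem intervalIntegrable_rpow_abs_of_mul_le (hb : 0 < b) (hT : 0 ≤ T)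
    (hf : IntervalIntegrable f volume 0 T) (hw : IntervalIntegrable w volume 0 T)
    (hfw : ∀ᵐ t ∂volume.restrict (Icc 0 T), b * |w t| ^ p ≤ f t) :
    IntervalIntegrable (fun t ↦ |w t| ^ p) volume 0 T := by
  rw [intervalIntegrable_iff_integrableOn_Icc_of_le hT] at hf hw ⊢
  refine (hf.const_mul b⁻¹).mono' (hw.1.aemeasurable.abs.pow_const p).aestronglyMeasurable ?_
  filter_upwards [hfw] with t ht
  rw [norm_of_nonneg (rpow_nonneg (abs_nonneg _) p)]
  exact (le_inv_mul_iff₀' hb).2 (by rwa [mul_comm])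

theorem rlTest_balancedWeight_caputoD (hn : 1 ≤ n) (hα1 : 1 < α) (hα2 : α ≤ 2) (hT : 0 < T)
    (hw : IntervalIntegrable w volume 0 T) (hw0 : DifferentiableAt ℝ w 0)
    (hAC : AC2On (capKernel α w) T) :
    rlTest (balancedWeight n) (n + α) (caputoD α w) T = rlTest (balancedWeight n) n w T -
      (T * deriv w 0 + w 0) * T ^ n * T / ((n + 1) * Gamma (n + 2)) := by
  rw [rlTest_caputoD _ hn hα1 hα2 hT.le hw hw0 hAC, ← rlTest_balancedWeight_affine hn hT,
    ← rlTest_sub _ hn hw ((by fun_prop : Continuous _).intervalIntegrable 0 T)]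
  simp only [sub_sub]

theorem initial_add_rlTest_le_rlTest_add (hγ : 0 < γ) (hn : 1 ≤ n) (hα1 : 1 < α) (hα2 : α ≤ 2)
    (hT : 0 < T) (hf : IntervalIntegrable f volume 0 T) (hw : IntervalIntegrable w volume 0 T)
    (hw0 : DifferentiableAt ℝ w 0) (hAC : AC2On (capKernel α w) T)
    (heq : ∀ᵐ t ∂volume.restrict (Icc 0 T), rlInt γ f t ≤ caputoD α w t + a * w t) :
    (T * deriv w 0 + w 0) * T ^ n * T / ((n + 1) * Gamma (n + 2)) +
        rlTest (balancedWeight n) (n + α + γ) f T ≤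
      rlTest (balancedWeight n) n w T + a * rlTest (balancedWeight n) (n + α) w T := by
  have hnα : 1 ≤ n + α := by linarith
  have hκ : balancedWeight n ≤ n + α := by
    linarith [balancedWeight_lt_add_one (zero_le_one.trans hn)]
  have hD : IntervalIntegrable (caputoD α w) volume 0 T := hAC.2.1
  have hmono := rlTest_mono_ae hnα hκ hT.le (intervalIntegrable_rlInt hγ hT.le hf)
    (hD.add (hw.const_mul a)) heq
  rw [rlTest_rlInt _ hγ hnα hT.le hf, rlTest_add _ hnα hD (hw.const_mul a), rlTest_const_mul,
    rlTest_balancedWeight_caputoD hn hα1 hα2 hT hw hw0 hAC] at hmono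
  linarith

theorem initial_add_rlInt_rpow_le_rlInt_abs (hγ : 0 < γ) (hn : 1 ≤ n) (hα1 : 1 < α) (hα2 : α ≤ 2)
    (hT : 0 < T) (hb : 0 < b) (hf : IntervalIntegrable f volume 0 T)
    (hw : IntervalIntegrable w volume 0 T) (hw0 : DifferentiableAt ℝ w 0)
    (hAC : AC2On (capKernel α w) T)
    (heq : ∀ᵐ t ∂volume.restrict (Icc 0 T), rlInt γ f t ≤ caputoD α w t + a * w t)
    (hfw : ∀ᵐ t ∂volume.restrict (Icc 0 T), b * |w t| ^ p ≤ f t) :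
    (T * deriv w 0 + w 0) * T ^ n / ((n + 1) * Gamma (n + 2)) +
        b * (1 - balancedWeight n / (n + α + γ)) * rlInt (n + α + γ) (fun t ↦ |w t| ^ p) T ≤
      rlInt n (fun t ↦ |w t|) T + |a| * rlInt (n + α) (fun t ↦ |w t|) T := by
  have hκ0 := balancedWeight_nonneg (zero_le_one.trans hn)
  have hκ := balancedWeight_lt_add_one (zero_le_one.trans hn)
  have hσ : 1 ≤ n + α + γ := by linarith
  have hκσ : balancedWeight n ≤ n + α + γ := by linarith
  have hwp := intervalIntegrable_rpow_abs_of_mul_le hb hT.le hf hw hfw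
  have hsource : T * (b * ((1 - balancedWeight n / (n + α + γ)) *
      rlInt (n + α + γ) (fun t ↦ |w t| ^ p) T)) ≤ rlTest (balancedWeight n) (n + α + γ) f T := by
    have hlower := le_rlTest_of_nonneg hκ0 hσ hT.le hwp fun s ↦ rpow_nonneg (abs_nonneg (w s)) p
    have hmono := rlTest_mono_ae hσ hκσ hT.le (hwp.const_mul b) hf hfw
    rw [rlTest_const_mul] at hmono
    linarith [mul_le_mul_of_nonneg_left hlower hb.le]
  have hfree : rlTest (balancedWeight n) n w T ≤ T * rlInt n (fun t ↦ |w t|) T :=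
    le_of_abs_le (abs_rlTest_le hκ0 hn (by linarith) hT.le hw)
  have hzeroth : a * rlTest (balancedWeight n) (n + α) w T ≤
      |a| * (T * rlInt (n + α) (fun t ↦ |w t|) T) := by
    refine (le_abs_self _).trans ?_
    rw [abs_mul]
    exact mul_le_mul_of_nonneg_left
      (abs_rlTest_le hκ0 (by linarith) (by linarith) hT.le hw) (abs_nonneg a)
  have htest := initial_add_rlTest_le_rlTest_add hγ hn hα1 hα2 hT hf hw hw0 hAC heq
  rw [mul_div_right_comm _ T] at htest
  refine le_of_mul_le_mul_left ?_ hT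
  linarith

end Bound

theorem apriori_bound_eq_general (γ α p a b : ℝ) (hγ : 0 < γ) (hα1 : 1 < α) (hα2 : α ≤ 2)
    (hp : 1 < p) (hb : 0 < b) :
    ∃ K₁ > (0 : ℝ), ∃ K₂ > (0 : ℝ), ∀ T > (0 : ℝ), ∀ f w : ℝ → ℝ,
      IntervalIntegrable f volume 0 T →
      IntervalIntegrable w volume 0 T →
      DifferentiableAt ℝ w 0 →
      AC2On (capKernel α w) T →
      (∀ᵐ t ∂(volume.restrict (Set.Icc (0 : ℝ) T)), rlInt γ f t ≤ caputoD α w t + a * w t) →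
      (∀ᵐ t ∂(volume.restrict (Set.Icc (0 : ℝ) T)), b * |w t| ^ p ≤ f t) →
      T * deriv w 0 + w 0
        ≤ K₁ * T ^ (α + γ - p * γ / (p - 1)) + K₂ * T ^ (-(α + γ) / (p - 1)) := by
  have hp0 : 0 < p - 1 := sub_pos.2 hp
  obtain ⟨n, hn_def⟩ : ∃ n, n = 1 + (α + γ) / (p - 1) := ⟨_, rfl⟩
  have hn : 1 ≤ n := hn_def ▸ le_add_of_nonneg_right (div_nonneg (by linarith) hp0.le)
  obtain ⟨c, hc_def⟩ : ∃ c, c = (n + 1) * Real.Gamma (n + 2) := ⟨_, rfl⟩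
  have hc : 0 < c := hc_def ▸ mul_pos (by linarith) (Real.Gamma_pos_of_pos (by linarith))
  have hβ : 0 < b * (1 - balancedWeight n / (n + α + γ)) :=
    mul_pos hb (one_sub_balancedWeight_div_pos (by linarith) (by linarith))
  obtain ⟨C₁, hC₁, C₂, hC₂, habsorb⟩ :=
    exists_rlInt_abs_add_le a (by linarith) hγ.le hp hβ hn_def.ge
  refine ⟨c * C₁, mul_pos hc hC₁, c * C₂, mul_pos hc hC₂, fun T hT f w hf hw hw0 hAC heq hfw ↦ ?_⟩
  have hinit := initial_add_rlInt_rpow_le_rlInt_abs hγ hn hα1 hα2 hT hb hf hw hw0 hAC heq hfw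
  have hyoung := habsorb T hT.le w hw (intervalIntegrable_rpow_abs_of_mul_le hb hT.le hf hw hfw)
  have hdata : (T * deriv w 0 + w 0) * T ^ n / c ≤
      C₁ * T ^ (n + (α - γ / (p - 1))) + C₂ * T ^ (n - (α + γ) / (p - 1)) := by
    rw [hc_def]
    linarith
  rw [div_le_iff₀ hc, Real.rpow_add hT, sub_eq_add_neg n, Real.rpow_add hT, ← neg_div] at hdata
  rw [show α + γ - p * γ / (p - 1) = α - γ / (p - 1) by field_simp; ring]
  refine le_of_mul_le_mul_left ?_ (Real.rpow_pos_of_pos hT n)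
  linarith

/-- Lemma 2.3 (i): a priori bound `T·w'(0) + w(0) ≤ K₁ T^{α+γ−pγ/(p−1)} + K₂ T^{−(α+γ)/(p−1)}`
for solutions of `₀D_t^α w + a w = ₀I_t^γ f`, `f ≥ b|w|^p`, with `K₁, K₂` independent of `T`. -/
theorem apriori_bound_eq
    (γ α p a b : ℝ) (hγ : 0 < γ) (hα1 : 1 < α) (hα2 : α < 2)
    (hp : 1 < p) (ha : 0 < a) (hb : 0 < b) :
    ∃ K₁ > (0:ℝ), ∃ K₂ > (0:ℝ), ∀ T > (0:ℝ), ∀ f w : ℝ → ℝ,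
      IntervalIntegrable f volume 0 T →
      ContDiff ℝ 1 w →
      (∃ t ∈ Set.Icc (0:ℝ) T, w t ≠ 0) →
      AC2On (capKernel α w) T →
      (∀ᵐ t ∂(volume.restrict (Set.Icc (0:ℝ) T)),
        caputoD α w t + a * w t = rlInt γ f t ∧ f t ≥ b * |w t| ^ p) →
      T * deriv w 0 + w 0
        ≤ K₁ * T ^ (α + γ - p * γ / (p - 1)) + K₂ * T ^ (-(α + γ) / (p - 1)) := by
  obtain ⟨K₁, hK₁, K₂, hK₂, hbound⟩ := apriori_bound_eq_general γ α p a b hγ hα1 hα2.le hp hb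
  exact ⟨K₁, hK₁, K₂, hK₂, fun T hT f w hf hw _ hAC h ↦
    hbound T hT f w hf (hw.continuous.intervalIntegrable 0 T)
      (hw.differentiable one_ne_zero).differentiableAt hAC
      (h.mono fun t ht ↦ ht.1.ge) (h.mono fun t ht ↦ ht.2)⟩
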